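/- arXiv:1303.5838 — 2 statements merged into one kernel-verified Lean document; each statement's English description precedes it below -/
import Mathlib

section
/- Let B' be a k×n complex matrix with rows Z₁,…,Z_k and for each j let H_j be the span of all rows except the j-th. Then ∑_{j=1}^k s_j(B')^{−2} = ∑_{j=1}^k dist(Z_j, H_j)^{−2}, where s_j(B') are the nonzero singular values of B' (assuming B' has full rank k). -/
/-- The singular values of a rectangular complex matrix, in nonincreasing order:
the square roots of the eigenvalues of B * Bᴴ, sorted nonincreasingly. -/
noncomputable def svals {k n : ℕ} (B : Matrix (Fin k) (Fin n) ℂ) : Fin k → ℝ :=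
  fun i =>
    Real.sqrt ((Matrix.isHermitian_mul_conjTranspose_self B).eigenvalues
      (Tuple.sort (Matrix.isHermitian_mul_conjTranspose_self B).eigenvalues i.rev))

open Matrix ComplexOrder in
lemma aux_posDef {k n : ℕ} (B : Matrix (Fin k) (Fin n) ℂ) (hrank : B.rank = k) :
    (B * Bᴴ).PosDef := by
  apply Matrix.PosDef.mul_conjTranspose_self
  rw [Matrix.vecMul_injective_iff, linearIndependent_iff_card_eq_finrank_span,
    Set.finrank, ← Matrix.rank_eq_finrank_span_row, hrank, Fintype.card_fin]

open Matrix ComplexOrder in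
lemma aux_trace {k : ℕ} (A : Matrix (Fin k) (Fin k) ℂ) (hA : A.IsHermitian)
    (h : ∀ i, 0 < hA.eigenvalues i) :
    A⁻¹.trace = ∑ i, (((hA.eigenvalues i)⁻¹ : ℝ) : ℂ) := by
  have hs := hA.spectral_theorem
  rw [Unitary.conjStarAlgAut_apply] at hs
  set U := hA.eigenvectorUnitary
  have h1 : (U : Matrix (Fin k) (Fin k) ℂ) * star (U : Matrix (Fin k) (Fin k) ℂ) = 1 :=
    Unitary.coe_mul_star_self U
  have h2 : star (U : Matrix (Fin k) (Fin k) ℂ) * (U : Matrix (Fin k) (Fin k) ℂ) = 1 :=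
    Unitary.coe_star_mul_self U
  set V : Matrix (Fin k) (Fin k) ℂ := (U : Matrix (Fin k) (Fin k) ℂ)
  set D : Matrix (Fin k) (Fin k) ℂ := diagonal (RCLike.ofReal ∘ hA.eigenvalues) with hD
  set E : Matrix (Fin k) (Fin k) ℂ := diagonal (fun i => (((hA.eigenvalues i)⁻¹ : ℝ) : ℂ)) with hE
  have hDE : D * E = 1 := by
    rw [hD, hE, diagonal_mul_diagonal, ← diagonal_one]
    congr 1
    ext i
    have : (hA.eigenvalues i : ℂ) ≠ 0 := by exact_mod_cast (h i).ne'
    simp [this]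
  have hinv : A⁻¹ = V * E * star V := by
    apply inv_eq_right_inv
    calc A * (V * E * star V) = (V * D * star V) * (V * E * star V) := by rw [← hs]
      _ = V * D * (star V * V) * E * star V := by simp only [Matrix.mul_assoc]
      _ = V * (D * E) * star V := by rw [h2]; simp only [Matrix.mul_assoc, Matrix.one_mul]
      _ = 1 := by rw [hDE, Matrix.mul_one, h1]
  rw [hinv, trace_mul_comm, ← Matrix.mul_assoc, h2, Matrix.one_mul, hE, trace_diagonal]

/-- Distance from a vector to a subspace, given a dual vector `W`. -/
lemma aux_dist {E : Type*} [NormedAddCommGroup E] [InnerProductSpace ℂ E]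
    (K : Submodule ℂ E) (z w : E) (hw : ∀ y ∈ K, inner ℂ w y = 0) (hz : inner ℂ w z = 1)
    (c : ℂ) (hc : z - c • w ∈ K) :
    ((Metric.infDist z (K : Set E)) ^ 2)⁻¹ = ‖w‖ ^ 2 := by
  have hw0 : w ≠ 0 := by
    rintro rfl
    simp at hz
  have hn : 0 < ‖w‖ := norm_pos_iff.mpr hw0
  have key : c * ((‖w‖ : ℂ) ^ 2) = 1 := by
    have := hw _ hc
    rw [inner_sub_right, hz, inner_smul_right, inner_self_eq_norm_sq_to_K] at this
    exact (sub_eq_zero.mp this).symm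
  have key2 : ‖c‖ * ‖w‖ ^ 2 = 1 := by
    have := congrArg norm key
    simpa using this
  have hd : Metric.infDist z (K : Set E) = ‖w‖⁻¹ := by
    apply le_antisymm
    · refine (Metric.infDist_le_dist_of_mem hc).trans (le_of_eq ?_)
      rw [dist_eq_norm, sub_sub_cancel, norm_smul]
      field_simp
      linarith
    · rw [Metric.le_infDist ⟨0, K.zero_mem⟩]
      intro y hy
      have h1 : inner ℂ w (z - y) = 1 := by rw [inner_sub_right, hz, hw y hy, sub_zero]
      have h2 := norm_inner_le_norm (𝕜 := ℂ) w (z - y)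
      rw [h1, norm_one] at h2
      rw [dist_eq_norm, inv_le_iff_one_le_mul₀ hn]
      linarith
  rw [hd, inv_pow, inv_inv]

open Matrix ComplexOrder in
theorem aux_term {k n : ℕ} 
    (B : Matrix (Fin k) (Fin n) ℂ) (hB : (B * Bᴴ).PosDef)
    (Z : Fin k → EuclideanSpace ℂ (Fin n))
    (hZ : ∀ i, Z i = (EuclideanSpace.equiv (Fin n) ℂ).symm (B i)) (j : Fin k) :
    (((((Metric.infDist (Z j)
            (Submodule.span ℂ {v | ∃ i, i ≠ j ∧ v = Z i} : Set (EuclideanSpace ℂ (Fin n)))) ^ 2)⁻¹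
            : ℝ)) : ℂ) = (B * Bᴴ)⁻¹ j j := by
  have hZ' : ∀ i m, Z i m = B i m := fun i m => by rw [hZ]; rfl
  set C := (B * Bᴴ)⁻¹ with hC
  have hdet : IsUnit (B * Bᴴ).det := (Matrix.isUnit_iff_isUnit_det _).mp hB.isUnit
  have hCB : C * B * Bᴴ = 1 := by rw [Matrix.mul_assoc, hC, nonsing_inv_mul _ hdet]
  have hCH : Cᴴ = C := hB.isHermitian.inv
  have hCC : (C * B) * (C * B)ᴴ = C := by
    rw [conjTranspose_mul, ← Matrix.mul_assoc, hCB, Matrix.one_mul, hCH]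
  let w : EuclideanSpace ℂ (Fin n) := ∑ i, C j i • Z i
  have hwm : ∀ m, w m = (C * B) j m := by
    intro m
    simp [w, Matrix.mul_apply, hZ']
  have hin : ∀ i, inner ℂ w (Z i) = if i = j then 1 else 0 := by
    intro i
    have h1 := congrFun (congrFun hCB j) i
    rw [← inner_conj_symm]
    have h2 : inner ℂ (Z i) w = (C * B * Bᴴ) j i := by
      rw [PiLp.inner_apply, Matrix.mul_apply]
      simp [hwm, hZ', conjTranspose_apply]
    rw [h2, h1, Matrix.one_apply]
    by_cases h : i = j
    · simp [h]
    · simp [h, Ne.symm h]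
  have hnorm : ((‖w‖ : ℂ)) ^ 2 = C j j := by
    have h2 : inner ℂ w w = ((C * B) * (C * B)ᴴ) j j := by
      rw [PiLp.inner_apply, Matrix.mul_apply]
      simp only [hwm, conjTranspose_apply]
      rfl
    rw [hCC, inner_self_eq_norm_sq_to_K] at h2
    exact h2
  have hCjj : C j j ≠ 0 := by
    intro h0
    rw [h0] at hnorm
    have hw0 : w = 0 := by simpa using hnorm
    have := hin j
    simp [hw0] at this
  have hd := aux_dist (Submodule.span ℂ {v | ∃ i, i ≠ j ∧ v = Z i}) (Z j) w ?_ ?_ (C j j)⁻¹ ?_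
  · rw [hd, ← hnorm]
    push_cast
    rfl
  · intro y hy
    induction hy using Submodule.span_induction with
    | mem x hx =>
      obtain ⟨i, hi, rfl⟩ := hx
      rw [hin, if_neg hi]
    | zero => simp
    | add x y _ _ hx hy => rw [inner_add_right, hx, hy, add_zero]
    | smul a x _ hx => rw [inner_smul_right, hx, mul_zero]
  · rw [hin, if_pos rfl]
  · have : Z j - (C j j)⁻¹ • w = -((C j j)⁻¹ • ∑ i ∈ Finset.univ.erase j, C j i • Z i) := by
      have h3 : w = C j j • Z j + ∑ i ∈ Finset.univ.erase j, C j i • Z i :=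
        (Finset.add_sum_erase _ _ (Finset.mem_univ j)).symm
      rw [h3, smul_add, smul_smul, inv_mul_cancel₀ hCjj, one_smul]
      abel
    rw [this]
    refine Submodule.neg_mem _ (Submodule.smul_mem _ _ (Submodule.sum_mem _ fun i hi => ?_))
    exact Submodule.smul_mem _ _ (Submodule.subset_span ⟨i, Finset.ne_of_mem_erase hi, rfl⟩)

/-- Negative second moment identity (Tao–Vu): for a full rank k×n matrix with rows Z_j,
∑ⱼ sⱼ(B)⁻² = ∑ⱼ dist(Z_j, span of the other rows)⁻². -/
theorem stmt13 {k n : ℕ} (hk : 0 < k) (hkn : k ≤ n)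
    (B : Matrix (Fin k) (Fin n) ℂ) (hrank : B.rank = k)
    (Z : Fin k → EuclideanSpace ℂ (Fin n))
    (hZ : ∀ i, Z i = (EuclideanSpace.equiv (Fin n) ℂ).symm (B i)) :
    ∑ j, ((svals B j) ^ 2)⁻¹
      = ∑ j : Fin k,
          ((Metric.infDist (Z j)
            (Submodule.span ℂ {v | ∃ i, i ≠ j ∧ v = Z i} : Set (EuclideanSpace ℂ (Fin n)))) ^ 2)⁻¹ := by
  have hB := aux_posDef B hrank
  have hpos : ∀ i, 0 < (Matrix.isHermitian_mul_conjTranspose_self B).eigenvalues i :=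
    fun i => hB.eigenvalues_pos i
  have hL : ∑ j, ((svals B j) ^ 2)⁻¹
      = ∑ j, ((Matrix.isHermitian_mul_conjTranspose_self B).eigenvalues j)⁻¹ := by
    simp only [svals]
    simp_rw [Real.sq_sqrt (hpos _).le]
    exact Equiv.sum_comp (Fin.revPerm.trans
      (Tuple.sort (Matrix.isHermitian_mul_conjTranspose_self B).eigenvalues))
      (fun j => ((Matrix.isHermitian_mul_conjTranspose_self B).eigenvalues j)⁻¹)
  rw [hL]
  apply Complex.ofReal_injective
  rw [Complex.ofReal_sum, Complex.ofReal_sum, ← aux_trace _ _ hpos, Matrix.trace]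
  exact Finset.sum_congr rfl fun j _ => (aux_term B hB Z hZ j).symm
end

section
/- Let B' be a k×n complex matrix of rank k, and suppose dist(Z_j, H_j) ≥ d > 0 for every row Z_j (H_j being the span of the other rows). Then for every i with k − n + i ≥ 1 (i.e., i ≥ n − k), the singular value s_{n−i}(B') satisfies s_{n−i}(B')² ≥ d²(k − n + i)/k. -/
lemma stmt14_lower {k n : ℕ} (Z : Fin k → EuclideanSpace ℂ (Fin n)) (d : ℝ)
    (j : Fin k)
    (hdist : d ≤ Metric.infDist (Z j)
      (Submodule.span ℂ {v | ∃ i, i ≠ j ∧ v = Z i} : Set (EuclideanSpace ℂ (Fin n))))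
    (c : Fin k → ℂ) : ‖c j‖ * d ≤ ‖∑ i, c i • Z i‖ := by
  by_cases hc : c j = 0
  · simp [hc]
  have hy : (-∑ i ∈ Finset.univ.erase j, (c i / c j) • Z i) ∈
      Submodule.span ℂ {v | ∃ i, i ≠ j ∧ v = Z i} := by
    apply Submodule.neg_mem
    apply Submodule.sum_mem
    intro i hi
    apply Submodule.smul_mem
    exact Submodule.subset_span ⟨i, Finset.ne_of_mem_erase hi, rfl⟩
  have h1 := hdist.trans (Metric.infDist_le_dist_of_mem hy)
  have h2 : ∑ i, c i • Z i = c j • (Z j - (-∑ i ∈ Finset.univ.erase j, (c i / c j) • Z i)) := by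
    rw [sub_neg_eq_add, smul_add, Finset.smul_sum,
      ← Finset.add_sum_erase _ _ (Finset.mem_univ j)]
    congr 1
    apply Finset.sum_congr rfl
    intro i _
    rw [smul_smul, mul_div_cancel₀ _ hc]
  rw [h2, norm_smul]
  rw [dist_eq_norm] at h1
  gcongr

/-- If B is a full rank k×n matrix whose every row is at distance at least d > 0 from
the span of the other rows, then for every i ≥ n − k (with i < n),
s_{n−i}(B)² ≥ d²(k − n + i)/k. -/
theorem stmt14 {k n : ℕ} (hk : 0 < k) (hkn : k ≤ n)
    (B : Matrix (Fin k) (Fin n) ℂ) (hrank : B.rank = k)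
    (Z : Fin k → EuclideanSpace ℂ (Fin n))
    (hZ : ∀ i, Z i = (EuclideanSpace.equiv (Fin n) ℂ).symm (B i))
    (d : ℝ) (hd : 0 < d)
    (hdist : ∀ j : Fin k, d ≤ Metric.infDist (Z j)
      (Submodule.span ℂ {v | ∃ i, i ≠ j ∧ v = Z i} : Set (EuclideanSpace ℂ (Fin n)))) :
    ∀ (i : ℕ) (h1 : n - k ≤ i) (h2 : i < n),
      d ^ 2 * ((k : ℝ) - n + i) / k ≤ (svals B ⟨n - i - 1, by omega⟩) ^ 2 := by
  have hlow : ∀ (c : Fin k → ℂ) (j : Fin k),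
      ‖c j‖ ^ 2 * d ^ 2 ≤ ∑ l, ‖(Matrix.vecMul c B) l‖ ^ 2 := by
    intro c j
    have h := stmt14_lower Z d j (hdist j) c
    have h2 : ‖∑ i, c i • Z i‖ ^ 2 = ∑ l, ‖(Matrix.vecMul c B) l‖ ^ 2 := by
      rw [EuclideanSpace.norm_sq_eq]
      apply Finset.sum_congr rfl
      intro l _
      simp [hZ, Matrix.vecMul, dotProduct]
    rw [← h2, ← mul_pow]
    gcongr
  have hinj : Function.Injective B.vecMul := by
    intro a b hab
    have h0 : Matrix.vecMul (a - b) B = 0 := by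
      rw [Matrix.sub_vecMul]; exact sub_eq_zero.2 hab
    funext j
    have h := hlow (a - b) j
    rw [h0] at h
    simp only [Pi.zero_apply, norm_zero] at h
    have h3 : ‖(a - b) j‖ ^ 2 ≤ 0 := by
      have : (0:ℝ) < d ^ 2 := by positivity
      by_contra hh
      push Not at hh
      have := mul_pos hh this
      simp at h
      simp at this
      linarith
    have h4 : ‖(a - b) j‖ = 0 := by
      have := sq_nonneg ‖(a - b) j‖
      exact pow_eq_zero_iff (two_ne_zero) |>.1 (le_antisymm h3 this)
    exact sub_eq_zero.1 (norm_eq_zero.1 h4)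
  open scoped ComplexOrder in
  have hpd : (B * B.conjTranspose).PosDef := Matrix.PosDef.mul_conjTranspose_self B hinj
  have hH := Matrix.isHermitian_mul_conjTranspose_self B
  have hpos : ∀ a, 0 < hH.eigenvalues a := fun a => hpd.eigenvalues_pos a
  have htr : ((B * B.conjTranspose)⁻¹).trace = ((∑ a, (hH.eigenvalues a)⁻¹ : ℝ) : ℂ) := by
    set U : Matrix (Fin k) (Fin k) ℂ := (hH.eigenvectorUnitary : Matrix (Fin k) (Fin k) ℂ) with hU
    have hUU : U * star U = 1 := Unitary.coe_mul_star_self hH.eigenvectorUnitary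
    have hUU' : star U * U = 1 := Unitary.coe_star_mul_self hH.eigenvectorUnitary
    have hs : B * B.conjTranspose =
        U * Matrix.diagonal (fun a => (hH.eigenvalues a : ℂ)) * star U := by
      have := hH.spectral_theorem
      rw [Unitary.conjStarAlgAut_apply] at this
      exact this
    have hinv : (B * B.conjTranspose)⁻¹ =
        U * Matrix.diagonal (fun a => ((hH.eigenvalues a : ℂ))⁻¹) * star U := by
      apply Matrix.inv_eq_right_inv
      refine (congrArg (fun X => X * (U * Matrix.diagonal (fun a => ((hH.eigenvalues a : ℂ))⁻¹)
        * star U)) hs).trans ?_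
      calc _ = U * Matrix.diagonal (fun a => (hH.eigenvalues a : ℂ)) * (star U * U) *
            Matrix.diagonal (fun a => ((hH.eigenvalues a : ℂ))⁻¹) * star U := by
              simp only [Matrix.mul_assoc]
        _ = U * (Matrix.diagonal (fun a => (hH.eigenvalues a : ℂ)) *
            Matrix.diagonal (fun a => ((hH.eigenvalues a : ℂ))⁻¹)) * star U := by
              rw [hUU', Matrix.mul_one]; simp only [Matrix.mul_assoc]
        _ = 1 := by
              rw [Matrix.diagonal_mul_diagonal]
              have : (fun a => (hH.eigenvalues a : ℂ) * ((hH.eigenvalues a : ℂ))⁻¹) =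
                  fun _ => 1 := by
                funext a
                exact mul_inv_cancel₀ (by exact_mod_cast (hpos a).ne')
              rw [this, Matrix.diagonal_one, Matrix.mul_one, hUU]
    rw [hinv, Matrix.trace_mul_comm, ← Matrix.mul_assoc, hUU', Matrix.one_mul,
      Matrix.trace_diagonal]
    push_cast
    rfl
  set M := (B * B.conjTranspose)⁻¹ with hM
  have hdet : IsUnit (B * B.conjTranspose).det :=
    (Matrix.isUnit_iff_isUnit_det _).1 hpd.isUnit
  have hMH : M.conjTranspose = M := hH.inv
  have hdiag : ∀ j, (M j j).re ≤ 1 / d ^ 2 := by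
    intro j
    have h := hlow (M j) j
    have e1 : ((∑ l, ‖(Matrix.vecMul (M j) B) l‖ ^ 2 : ℝ) : ℂ) = M j j := by
      have : (M * B) * (M * B).conjTranspose = M := by
        rw [Matrix.conjTranspose_mul, hMH, Matrix.mul_assoc, ← Matrix.mul_assoc B,
          Matrix.mul_nonsing_inv _ hdet, Matrix.mul_one]
      have h2 := congrFun (congrFun this j) j
      rw [← h2, Matrix.mul_apply]
      push_cast
      apply Finset.sum_congr rfl
      intro l _
      rw [Matrix.conjTranspose_apply, ← Complex.mul_conj']
      rfl
    have e2 := congrArg Complex.re e1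
    rw [Complex.ofReal_re] at e2
    rw [e2] at h
    have h3 : (M j j).re ^ 2 ≤ ‖M j j‖ ^ 2 := by
      rw [← sq_abs]
      gcongr
      exact Complex.abs_re_le_norm _
    have hd2 : 0 < d ^ 2 := by positivity
    rw [le_div_iff₀ hd2]
    by_contra hh
    push Not at hh
    have hp : 0 < (M j j).re := by
      by_contra hn
      push Not at hn
      nlinarith
    nlinarith
  have hsum : ∑ a, (hH.eigenvalues a)⁻¹ ≤ k / d ^ 2 := by
    have := congrArg Complex.re htr
    rw [Complex.ofReal_re] at this
    rw [← this, Matrix.trace, Complex.re_sum]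
    calc _ ≤ ∑ _j : Fin k, 1 / d ^ 2 := Finset.sum_le_sum fun j _ => hdiag j
      _ = k / d ^ 2 := by simp [div_eq_mul_inv]
  intro i h1 h2
  unfold svals
  rw [Real.sq_sqrt (hpos _).le]
  set p : Fin k := Fin.rev ⟨n - i - 1, by omega⟩ with hp
  have hpv : (p : ℕ) = k + i - n := by
    simp only [hp, Fin.val_rev]; omega
  have hpr : ((k : ℝ) - n + i) = (p : ℕ) := by
    rw [hpv, Nat.cast_sub (by omega)]; push_cast; ring
  set σ := Tuple.sort hH.eigenvalues with hσ
  have hmono : Monotone (hH.eigenvalues ∘ σ) := Tuple.monotone_sort _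
  have hL := hpos (σ p)
  have key : (p : ℕ) * (hH.eigenvalues (σ p))⁻¹ ≤ k / d ^ 2 := by
    calc ((p : ℕ) : ℝ) * (hH.eigenvalues (σ p))⁻¹
        = ∑ q ∈ Finset.Iio p, (hH.eigenvalues (σ p))⁻¹ := by simp
      _ ≤ ∑ q ∈ Finset.Iio p, (hH.eigenvalues (σ q))⁻¹ := by
          apply Finset.sum_le_sum
          intro q hq
          exact inv_anti₀ (hpos _) (hmono (Finset.mem_Iio.1 hq).le)
      _ ≤ ∑ q, (hH.eigenvalues (σ q))⁻¹ :=
          Finset.sum_le_sum_of_subset_of_nonneg (Finset.subset_univ _)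
            fun q _ _ => (inv_pos.2 (hpos _)).le
      _ = ∑ a, (hH.eigenvalues a)⁻¹ := Equiv.sum_comp σ fun a => (hH.eigenvalues a)⁻¹
      _ ≤ _ := hsum
  rw [hpr]
  have hk' : (0:ℝ) < k := by exact_mod_cast hk
  have hd2 : 0 < d ^ 2 := by positivity
  rw [← div_eq_mul_inv, div_le_div_iff₀ hL hd2] at key
  rw [div_le_iff₀ hk']
  linarith
end
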